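/- Let M be a semi-integral residuated pomonoid and write ~a := a\e (= e/a). Then the map a ↦ ~a is both antitone and monotone with respect to ≼; consequently, for all a, b ∈ M, if a ≼ b then ~a = ~b. -/

import Mathlib

/-- A semi-integral residuated pomonoid (sirmonoid): a partially ordered monoid with
left and right residuals, i.e. `b ≤ a\c ↔ a*b ≤ c ↔ a ≤ c/b`, in which the monoid
unit `e` is a maximal element.  `ldiv a c` denotes `a\c` and `rdiv c b` denotes `c/b`. -/
class Sirmonoid (α : Type*) extends PartialOrder α, Monoid α where
  ldiv : α → α → α
  rdiv : α → α → α
  le_ldiv_iff : ∀ a b c : α, b ≤ ldiv a c ↔ a * b ≤ c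
  le_rdiv_iff : ∀ a b c : α, a ≤ rdiv c b ↔ a * b ≤ c
  one_maximal : ∀ a : α, 1 ≤ a → a = 1

open Sirmonoid

/-!
Let `a ≤ b`. Semi-integrality forces `a \ b = 1`, so every `d` with `a * d ≤ b` lies below `1`.
If `a * c ≤ 1`, then `a * (c * b) = (a * c) * b ≤ b`, hence `c * b ≤ 1`: the product has been
turned around and `a` replaced by `b`. Doing this a second time, now starting from `c ≤ c` and
`c * b ≤ 1`, gives `b * c ≤ 1`. Hence `a \ 1 ≤ b \ 1`.
-/

section LeftResiduated

variable {α : Type*} {ldiv : α → α → α} {a b c d : α}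

theorem le_one_of_le_of_mul_le [Preorder α] [MulOneClass α]
    {u : α → α} (gc : GaloisConnection (a * ·) u) (hmax : IsMax (1 : α))
    (hab : a ≤ b) (had : a * d ≤ b) : d ≤ 1 :=
  have one_le : 1 ≤ u b := gc.le_u ((mul_one a).trans_le hab)
  (gc.le_u had).trans (hmax one_le)

theorem mul_le_one_of_le_of_mul_le_one [Preorder α] [Monoid α] [MulRightMono α]
    {u : α → α} (gc : GaloisConnection (a * ·) u) (hmax : IsMax (1 : α))
    (hab : a ≤ b) (hac : a * c ≤ 1) : c * b ≤ 1 := by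
  refine le_one_of_le_of_mul_le gc hmax hab ?_
  calc a * (c * b) = a * c * b := (mul_assoc a c b).symm
    _ ≤ b := mul_le_of_le_one_left' hac

theorem mul_le_one_iff_of_le [Preorder α] [Monoid α] [MulRightMono α]
    (gc : ∀ x : α, GaloisConnection (x * ·) (ldiv x)) (hmax : IsMax (1 : α))
    (hab : a ≤ b) : a * c ≤ 1 ↔ b * c ≤ 1 where
  mp hac :=
    have hcb : c * b ≤ 1 := mul_le_one_of_le_of_mul_le_one (gc a) hmax hab hac
    mul_le_one_of_le_of_mul_le_one (gc c) hmax le_rfl hcb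
  mpr hbc := (mul_le_mul_left hab c).trans hbc

theorem sirmonoid_not_antitone_monotone_general [PartialOrder α] [Monoid α] [MulRightMono α]
    (gc : ∀ x : α, GaloisConnection (x * ·) (ldiv x)) (hmax : IsMax (1 : α))
    (hab : a ≤ b) : ldiv a 1 = ldiv b 1 :=
  eq_of_forall_le_iff fun c =>
    calc c ≤ ldiv a 1 ↔ a * c ≤ 1 := (gc a c 1).symm
      _ ↔ b * c ≤ 1 := mul_le_one_iff_of_le gc hmax hab
      _ ↔ c ≤ ldiv b 1 := gc b c 1

end LeftResiduated

namespace Sirmonoid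

variable {α : Type*} [Sirmonoid α]

theorem gc_mul_ldiv (a : α) : GaloisConnection (a * ·) (ldiv a) :=
  fun b c => (le_ldiv_iff a b c).symm

theorem gc_mul_rdiv (b : α) : GaloisConnection (· * b) (rdiv · b) :=
  fun a c => (le_rdiv_iff a b c).symm

instance : MulRightMono α where
  elim b _ _ h := (gc_mul_rdiv b).monotone_l h

theorem isMax_one : IsMax (1 : α) :=
  fun a h => (one_maximal a h).le

end Sirmonoid

/-- In any sirmonoid, the map `a ↦ ~a` is both antitone and monotone w.r.t. `≼`;
consequently `a ≼ b` implies `~a = ~b`.  Here `~a := a\e = e/a`. -/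
theorem sirmonoid_not_antitone_monotone {α : Type*} [Sirmonoid α] :
    (∀ a b : α, a ≤ b → ldiv b 1 ≤ ldiv a 1) ∧
    (∀ a b : α, a ≤ b → ldiv a 1 ≤ ldiv b 1) ∧
    (∀ a b : α, a ≤ b → ldiv a 1 = ldiv b 1) := by
  have neg_eq {a b : α} (hab : a ≤ b) : ldiv a 1 = ldiv b 1 :=
    sirmonoid_not_antitone_monotone_general gc_mul_ldiv isMax_one hab
  exact ⟨fun _ _ hab => (neg_eq hab).ge, fun _ _ hab => (neg_eq hab).le, fun _ _ => neg_eq⟩
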